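/- For all natural numbers n and m, F(n,m) = ∑_{i=0}^{n+1} d(n,i)·m^i and G(n,m) = ∑_{i=0}^{n+1} g(n,i)·m^i. -/

import Mathlib

/-!
For fixed `n`, the `d n i` and `g n i` are the coefficients of polynomials `dPoly n` and `gPoly n`
of degree at most `n + 1` (`d_g_eq_zero`). The defining recursion of `g` is the Cauchy product, so
`gPoly (n+1) = ∑ k ≤ n, gPoly k * dPoly (n-k)`; the binomial sum in the recursion of `d` is the
expansion of `(X + 1)^j`, so `dPoly (n+1) = dPoly n (X + 1) + gPoly (n+1)`. Evaluated at `m`, these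
are exactly the recursions of `G` and `F`, and the theorem follows by strong induction.
-/

mutual
/-- `G n m` counts neutral terms of size `n` with at most `m` distinct free indices. -/
def G : ℕ → ℕ → ℕ
  | 0, m => m
  | n+1, m => ∑ k ∈ (Finset.range (n+1)).attach, G (n - k.1) m * F k.1 m
termination_by n _ => (n, 0)
decreasing_by
  · exact Prod.Lex.left _ _ (Nat.lt_succ_of_le (Nat.sub_le n k.1))
  · exact Prod.Lex.left _ _ (Finset.mem_range.mp k.2)

/-- `F n m` counts β-normal forms of size `n` with at most `m` distinct free indices. -/
def F : ℕ → ℕ → ℕ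
  | 0, m => m
  | n+1, m => F n (m+1) + G (n+1) m
termination_by n _ => (n, 1)
decreasing_by
  · exact Prod.Lex.left _ _ (Nat.lt_succ_self n)
  · exact Prod.Lex.right _ (Nat.lt_succ_self 0)
end

mutual
/-- `g n i` counts `i`-nf-pre-contexts of size `n`. -/
def g : ℕ → ℕ → ℕ
  | 0, i => if i = 1 then 1 else 0
  | n+1, i => ∑ j ∈ Finset.range (i+1), ∑ k ∈ (Finset.range (n+1)).attach,
      g k.1 j * d (n - k.1) (i - j)
termination_by n _ => (n, 0)
decreasing_by
  · exact Prod.Lex.left _ _ (Finset.mem_range.mp k.2)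
  · exact Prod.Lex.left _ _ (Nat.lt_succ_of_le (Nat.sub_le n k.1))

/-- `d n i` counts `i`-nf-contexts (closed normal forms with `i` holes) of size `n`. -/
def d : ℕ → ℕ → ℕ
  | 0, i => if i = 1 then 1 else 0
  | n+1, i => (∑ j ∈ Finset.Icc i (n+1), Nat.choose j i * d n j) + g (n+1) i
termination_by n _ => (n, 1)
decreasing_by
  · exact Prod.Lex.left _ _ (Nat.lt_succ_self n)
  · exact Prod.Lex.right _ (Nat.lt_succ_self 0)
end

open Polynomial in
/-- The polynomial `∑ i ≤ n+1, d n i * X^i`. -/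
noncomputable def dPoly (n : ℕ) : ℕ[X] := ∑ i ∈ Finset.range (n+2), monomial i (d n i)

open Polynomial in
/-- The polynomial `∑ i ≤ n+1, g n i * X^i`. -/
noncomputable def gPoly (n : ℕ) : ℕ[X] := ∑ i ∈ Finset.range (n+2), monomial i (g n i)

theorem G_succ (n m : ℕ) : G (n+1) m = ∑ k ∈ Finset.range (n+1), G (n-k) m * F k m := by
  rw [G, Finset.sum_attach (Finset.range (n+1)) (fun k => G (n-k) m * F k m)]

theorem g_succ (n i : ℕ) : g (n+1) i =
    ∑ j ∈ Finset.range (i+1), ∑ k ∈ Finset.range (n+1), g k j * d (n-k) (i-j) := by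
  rw [g]
  refine Finset.sum_congr rfl fun j _ => ?_
  rw [Finset.sum_attach (Finset.range (n+1)) (fun k => g k j * d (n-k) (i-j))]

/-- A context of size `n` has at most `n + 1` holes. -/
theorem d_g_eq_zero (n : ℕ) : ∀ i, n + 1 < i → d n i = 0 ∧ g n i = 0 := by
  induction n using Nat.strong_induction_on with
  | _ n ih =>
    intro i hi
    cases n with
    | zero =>
      have h : i ≠ 1 := by lia
      simp [d, g, h]
    | succ n =>
      have hg : g (n+1) i = 0 := by
        rw [g_succ]
        refine Finset.sum_eq_zero fun j _ => Finset.sum_eq_zero fun k hk => ?_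
        have hk' := Finset.mem_range.mp hk
        by_cases hj : k + 1 < j
        · rw [(ih k hk' j hj).2, zero_mul]
        · rw [(ih (n-k) (by lia) (i-j) (by lia)).1, mul_zero]
      refine ⟨?_, hg⟩
      rw [d, hg, Finset.Icc_eq_empty (by lia)]
      simp

theorem coeff_dPoly (n i : ℕ) : (dPoly n).coeff i = d n i := by
  simp only [dPoly, Polynomial.finsetSum_coeff, Polynomial.coeff_monomial,
    Finset.sum_ite_eq', Finset.mem_range]
  split_ifs with h
  · rfl
  · exact (d_g_eq_zero n i (by lia)).1.symm

theorem coeff_gPoly (n i : ℕ) : (gPoly n).coeff i = g n i := by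
  simp only [gPoly, Polynomial.finsetSum_coeff, Polynomial.coeff_monomial,
    Finset.sum_ite_eq', Finset.mem_range]
  split_ifs with h
  · rfl
  · exact (d_g_eq_zero n i (by lia)).2.symm

theorem gPoly_succ (n : ℕ) :
    gPoly (n+1) = ∑ k ∈ Finset.range (n+1), gPoly k * dPoly (n-k) := by
  ext i
  simp only [coeff_gPoly, Polynomial.finsetSum_coeff, Polynomial.coeff_mul, coeff_dPoly]
  rw [g_succ, Finset.sum_comm]
  refine Finset.sum_congr rfl fun k _ => ?_
  rw [Finset.Nat.sum_antidiagonal_eq_sum_range_succ (fun a b => g k a * d (n-k) b)]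

open Polynomial in
theorem dPoly_succ (n : ℕ) : dPoly (n+1) = (dPoly n).comp (X + 1) + gPoly (n+1) := by
  ext i
  rw [coeff_add, coeff_gPoly, coeff_dPoly, d, dPoly, sum_comp, finsetSum_coeff]
  congr 1
  simp only [monomial_comp, coeff_C_mul, coeff_X_add_one_pow, Nat.cast_id, mul_comm (d n _)]
  -- The terms with `j < i` that the full range adds have `j.choose i = 0`.
  apply Finset.sum_subset
  · intro j hj
    simp only [Finset.mem_Icc, Finset.mem_range] at hj ⊢
    lia
  · intro j hj hj'
    simp only [Finset.mem_Icc, Finset.mem_range] at hj hj'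
    rw [Nat.choose_eq_zero_of_lt (by lia), zero_mul]

theorem F_G_eq_eval (n : ℕ) : ∀ m, F n m = (dPoly n).eval m ∧ G n m = (gPoly n).eval m := by
  induction n using Nat.strong_induction_on with
  | _ n ih =>
    intro m
    cases n with
    | zero => simp [F, G, dPoly, gPoly, d, g, Finset.sum_range_succ]
    | succ n =>
      have hG : G (n+1) m = (gPoly (n+1)).eval m := by
        rw [G_succ, gPoly_succ, Polynomial.eval_finsetSum, ← Finset.sum_range_reflect]
        refine Finset.sum_congr rfl fun k hk => ?_
        have hk' := Finset.mem_range.mp hk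
        rw [Polynomial.eval_mul, ← (ih k hk' m).2, ← (ih (n-k) (by lia) m).1]
        congr 2; lia
      refine ⟨?_, hG⟩
      rw [F, hG, dPoly_succ, (ih n (by lia) (m+1)).1]
      simp

/-- `F n m = ∑_{i=0}^{n+1} d n i * m^i` and `G n m = ∑_{i=0}^{n+1} g n i * m^i`. -/
theorem F_G_eq_sum (n m : ℕ) :
    F n m = (∑ i ∈ Finset.range (n+2), d n i * m ^ i) ∧
    G n m = (∑ i ∈ Finset.range (n+2), g n i * m ^ i) := by
  simpa [dPoly, gPoly, Polynomial.eval_finsetSum] using F_G_eq_eval n m
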